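/- Let G_s(x) = (4πs)^{−1/2} exp(−x²/(4s)) for s > 0, x ∈ ℝ. For every T > 0 there exists a constant C_T < ∞ such that for all t with 0 < t ≤ T and all x with |x| ≤ 1, Σ_{j∈ℤ, j≠0} ∫₀^t |∂_x G_{t−τ}(x − 2j)| dτ ≤ C_T. -/

import Mathlib

open MeasureTheory intervalIntegral

/-- One-dimensional Gauss (heat) kernel `G_s(x) = (4πs)^{−1/2} exp(−x²/(4s))`. -/
noncomputable def heatKernel (s x : ℝ) : ℝ :=
  (4 * Real.pi * s) ^ (-(1 : ℝ) / 2) * Real.exp (-x ^ 2 / (4 * s))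

/-! With `z = |y| / (2√s)` one has `y² |∂ₓG_s(y)| = (2/√π) z³ exp(-z²)`, and `z³ exp(-z²) ≤ 1`, so
`|∂ₓG_s(y)| ≤ 2 / y²` uniformly in `s`. Integrating over a time interval of length `t` costs a
factor `t`. If `|x| ≤ r < p`, then `|x - p j| ≥ (p - r) |j|` for `j ≠ 0`, so the sum over the
non-central translates is dominated by `2 t ∑ 1 / ((p - r) j)²`. -/

theorem heatKernel_nonneg {s : ℝ} (hs : 0 ≤ s) (y : ℝ) : 0 ≤ heatKernel s y := by
  unfold heatKernel
  positivity

theorem hasDerivAt_heatKernel (s y : ℝ) :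
    HasDerivAt (heatKernel s) (-(y / (2 * s)) * heatKernel s y) y := by
  have hexponent : HasDerivAt (fun y : ℝ => -y ^ 2 / (4 * s)) (-(2 * y) / (4 * s)) y := by
    simpa using (hasDerivAt_pow 2 y).neg.div_const (4 * s)
  refine (hexponent.exp.const_mul ((4 * Real.pi * s) ^ (-(1 : ℝ) / 2))).congr_deriv ?_
  unfold heatKernel
  ring

theorem abs_deriv_heatKernel {s : ℝ} (hs : 0 ≤ s) (y : ℝ) :
    |deriv (heatKernel s) y| = |y| / (2 * s) * heatKernel s y := by
  rw [(hasDerivAt_heatKernel s y).deriv, abs_mul, abs_neg, abs_div,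
    abs_of_nonneg (by positivity : 0 ≤ 2 * s), abs_of_nonneg (heatKernel_nonneg hs y)]

theorem heatKernel_eq_exp_neg_sq_div {s : ℝ} (hs : 0 < s) (y : ℝ) :
    heatKernel s y = Real.exp (-(|y| / (2 * √s)) ^ 2) / (2 * √Real.pi * √s) := by
  have hprefactor : (4 * Real.pi * s) ^ (-(1 : ℝ) / 2) = (2 * √Real.pi * √s)⁻¹ := by
    rw [neg_div, Real.rpow_neg (by positivity), ← Real.sqrt_eq_rpow,
      Real.sqrt_mul (by positivity), Real.sqrt_mul (by norm_num),
      show (4 : ℝ) = 2 ^ 2 by norm_num, Real.sqrt_sq zero_le_two]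
  have hexponent : -y ^ 2 / (4 * s) = -(|y| / (2 * √s)) ^ 2 := by
    rw [div_pow, mul_pow, sq_abs, Real.sq_sqrt hs.le]
    ring
  rw [heatKernel, hprefactor, hexponent, inv_mul_eq_div]

theorem sq_mul_abs_deriv_heatKernel {s : ℝ} (hs : 0 < s) (y : ℝ) :
    y ^ 2 * |deriv (heatKernel s) y| =
      2 / √Real.pi * ((|y| / (2 * √s)) ^ 3 * Real.exp (-(|y| / (2 * √s)) ^ 2)) := by
  rw [abs_deriv_heatKernel hs.le, heatKernel_eq_exp_neg_sq_div hs, ← sq_abs y]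
  field_simp
  rw [Real.sq_sqrt hs.le]

theorem pow_three_mul_exp_neg_sq_le_one (z : ℝ) : z ^ 3 * Real.exp (-z ^ 2) ≤ 1 := by
  rw [Real.exp_neg, ← div_eq_mul_inv, div_le_one (Real.exp_pos _)]
  calc z ^ 3 ≤ 1 + z ^ 2 + (z ^ 2) ^ 2 / 2 := by nlinarith [sq_nonneg (z ^ 2 - z)]
    _ ≤ Real.exp (z ^ 2) := Real.quadratic_le_exp_of_nonneg (sq_nonneg z)

theorem abs_deriv_heatKernel_le {s y : ℝ} (hs : 0 < s) (hy : y ≠ 0) :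
    |deriv (heatKernel s) y| ≤ 2 / y ^ 2 := by
  have hpi : 1 ≤ √Real.pi := Real.one_le_sqrt.mpr (by linarith [Real.pi_gt_three])
  rw [le_div_iff₀' (by positivity), sq_mul_abs_deriv_heatKernel hs]
  calc 2 / √Real.pi * ((|y| / (2 * √s)) ^ 3 * Real.exp (-(|y| / (2 * √s)) ^ 2))
      ≤ 2 / 1 * 1 := by
        gcongr
        exact pow_three_mul_exp_neg_sq_le_one _
    _ = 2 := by norm_num

theorem integral_abs_deriv_heatKernel_le {t y : ℝ} (ht : 0 ≤ t) (hy : y ≠ 0) :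
    ∫ s in (0 : ℝ)..t, |deriv (heatKernel s) y| ≤ 2 * t / y ^ 2 := by
  have hbound : ∀ s ∈ Set.uIoc 0 t, ‖|deriv (heatKernel s) y|‖ ≤ 2 / y ^ 2 := by
    intro s hs
    rw [Set.uIoc_of_le ht] at hs
    simpa only [Real.norm_eq_abs, abs_abs] using abs_deriv_heatKernel_le hs.1 hy
  calc ∫ s in (0 : ℝ)..t, |deriv (heatKernel s) y|
      ≤ 2 / y ^ 2 * |t - 0| := (le_abs_self _).trans (norm_integral_le_of_norm_le_const hbound)
    _ = 2 * t / y ^ 2 := by rw [sub_zero, abs_of_nonneg ht, div_mul_eq_mul_div]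

section Lattice

variable {p r t x : ℝ}

theorem sub_mul_abs_int_le_abs_sub_mul (hx : |x| ≤ r) {j : ℤ} (hj : j ≠ 0) :
    (p - r) * |(j : ℝ)| ≤ |x - p * j| := by
  have hone : (1 : ℝ) ≤ |(j : ℝ)| := mod_cast Int.one_le_abs hj
  calc (p - r) * |(j : ℝ)| ≤ |p| * |(j : ℝ)| - r := by
        nlinarith [le_abs_self p, (abs_nonneg x).trans hx]
    _ ≤ |p * j| - |x| := by rw [abs_mul]; gcongr
    _ ≤ |x - p * j| := by rw [abs_sub_comm]; exact abs_sub_abs_le_abs_sub _ _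

theorem integral_abs_deriv_heatKernel_translate_le (ht : 0 ≤ t) (hrp : r < p) (hx : |x| ≤ r)
    {j : ℤ} (hj : j ≠ 0) :
    ∫ τ in (0 : ℝ)..t, |deriv (heatKernel (t - τ)) (x - p * j)| ≤
      2 * t * (1 / ((p - r) * j) ^ 2) := by
  have hgap : 0 < p - r := sub_pos.mpr hrp
  have hdist : |(p - r) * j| ≤ |x - p * j| := by
    simpa only [abs_mul, abs_of_pos hgap] using sub_mul_abs_int_le_abs_sub_mul hx hj
  have hpos : 0 < |(p - r) * (j : ℝ)| := by positivity
  calc ∫ τ in (0 : ℝ)..t, |deriv (heatKernel (t - τ)) (x - p * j)|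
      = ∫ s in (0 : ℝ)..t, |deriv (heatKernel s) (x - p * j)| := by
        simpa only [sub_self, sub_zero] using integral_comp_sub_left (a := 0) (b := t)
          (fun s => |deriv (heatKernel s) (x - p * j)|) t
    _ ≤ 2 * t / (x - p * j) ^ 2 :=
        integral_abs_deriv_heatKernel_le ht (abs_pos.mp (hpos.trans_le hdist))
    _ ≤ 2 * t / ((p - r) * j) ^ 2 := by
        rw [← sq_abs (x - p * j), ← sq_abs ((p - r) * (j : ℝ))]
        gcongr
    _ = 2 * t * (1 / ((p - r) * j) ^ 2) := (mul_one_div _ _).symm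

theorem summable_one_div_mul_int_sq (a : ℝ) : Summable fun j : ℤ => 1 / (a * j) ^ 2 := by
  have hsq : Summable fun j : ℤ => 1 / (j : ℝ) ^ 2 :=
    Real.summable_one_div_int_pow.mpr one_lt_two
  simpa only [mul_pow, div_mul_eq_div_mul_one_div] using hsq.mul_left (1 / a ^ 2)

theorem summable_integral_abs_deriv_heatKernel_translate (ht : 0 ≤ t) (hrp : r < p)
    (hx : |x| ≤ r) :
    Summable fun j : {j : ℤ // j ≠ 0} =>
      ∫ τ in (0 : ℝ)..t, |deriv (heatKernel (t - τ)) (x - p * (j : ℤ))| :=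
  (((summable_one_div_mul_int_sq (p - r)).subtype _).mul_left (2 * t)).of_nonneg_of_le
    (fun _ => integral_nonneg ht fun _ _ => abs_nonneg _)
    fun j => integral_abs_deriv_heatKernel_translate_le ht hrp hx j.2

theorem tsum_integral_abs_deriv_heatKernel_translate_le (ht : 0 ≤ t) (hrp : r < p)
    (hx : |x| ≤ r) :
    ∑' j : {j : ℤ // j ≠ 0},
        ∫ τ in (0 : ℝ)..t, |deriv (heatKernel (t - τ)) (x - p * (j : ℤ))| ≤
      2 * t * ∑' j : {j : ℤ // j ≠ 0}, 1 / ((p - r) * (j : ℤ)) ^ 2 := by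
  rw [← tsum_mul_left]
  exact (summable_integral_abs_deriv_heatKernel_translate ht hrp hx).tsum_le_tsum
    (fun j => integral_abs_deriv_heatKernel_translate_le ht hrp hx j.2)
    (((summable_one_div_mul_int_sq (p - r)).subtype _).mul_left (2 * t))

end Lattice

theorem lattice_sum_deriv_heatKernel_bound_general (T : ℝ) {p r : ℝ} (hrp : r < p) :
    ∃ C : ℝ, ∀ t : ℝ, 0 < t → t ≤ T → ∀ x : ℝ, |x| ≤ r →
      ∑' j : {j : ℤ // j ≠ 0},
        (∫ τ in (0 : ℝ)..t, |deriv (heatKernel (t - τ)) (x - p * (j : ℤ))|) ≤ C := by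
  refine ⟨2 * T * ∑' j : {j : ℤ // j ≠ 0}, 1 / ((p - r) * (j : ℤ)) ^ 2, fun t ht htT x hx => ?_⟩
  calc _ ≤ 2 * t * ∑' j : {j : ℤ // j ≠ 0}, 1 / ((p - r) * (j : ℤ)) ^ 2 :=
        tsum_integral_abs_deriv_heatKernel_translate_le ht.le hrp hx
    _ ≤ _ := by gcongr

/-- Uniform bound for the far-field lattice sum of derivatives of the
heat kernel: for each `T > 0` there is `C_T < ∞` such that for all `0 < t ≤ T` and
`|x| ≤ 1`, `Σ_{j ≠ 0} ∫₀^t |∂ₓ G_{t−τ}(x − 2j)| dτ ≤ C_T`. -/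
theorem lattice_sum_deriv_heatKernel_bound (T : ℝ) (hT : 0 < T) :
    ∃ C : ℝ, ∀ t : ℝ, 0 < t → t ≤ T → ∀ x : ℝ, |x| ≤ 1 →
      ∑' j : {j : ℤ // j ≠ 0},
        (∫ τ in (0:ℝ)..t, |deriv (fun y => heatKernel (t - τ) y) (x - 2 * ((j : ℤ) : ℝ))|) ≤ C :=
  lattice_sum_deriv_heatKernel_bound_general T one_lt_two
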